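/- Fix μ₀ ∈ ℂ and n ≥ 1. The set of parameters κ ∈ ℂ for which E_κ(z) = exp(z) + κ has a periodic point a of period n with multiplier exactly μ₀ (i.e., E_κ^n(a) = a and (E_κ^n)'(a) = μ₀) is either all of ℂ or a discrete (countable, with no accumulation points in ℂ) subset of ℂ. -/

import Mathlib

/-!
The parameter set `S` is the projection to the `κ`-plane of the common zeros of
`F (κ, a) = E_κ^n(a) - a` and `G (κ, a) = ∏_{i<n} exp(E_κ^i(a)) - μ₀`, the product being the
multiplier.

* Properness (`periodic_bound`): for bounded `κ`, all solutions `a` lie in a fixed disc. The radius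
  of the disc may be enlarged so that `F (κ₀, ·)`, which is not identically zero
  (`E_iterate_ne_id`), has no zero on the boundary circle.
* Elimination (`solvable_or_not`): for `κ` near `κ₀`, let `b_1, …, b_m` be the zeros of `F (κ, ·)` in
  the disc. The power sums `∑ G (κ, b_i)^k = (2πi)⁻¹ ∮ G^k F_a / F da` are analytic in `κ`; for `k = 0`
  this shows that `m` is locally constant, and Newton's identities then make `∏ G (κ, b_i)` analytic.
  It vanishes exactly when `κ ∈ S`, so by the one-variable identity theorem `S` contains a
  neighbourhood of `κ₀` or misses a punctured one. This argument also covers `μ₀ = 1`, where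
  `a` need not be an analytic function of `κ`.
* Connectedness of `ℂ` (`univ_or_isolated`) turns this local alternative into the global one; a set
  without accumulation points in `ℂ` is countable.
-/

/-- The exponential map E_κ(z) = exp(z) + κ. -/
noncomputable def E (κ : ℂ) (z : ℂ) : ℂ := Complex.exp z + κ

open Filter Topology Metric Set

/-! ### Zeros of entire functions in a disc -/

lemma finite_zeros_closedBall {h : ℂ → ℂ} (hh : Differentiable ℂ h) {w : ℂ} (hw : h w ≠ 0)
    (R : ℝ) : {z | z ∈ closedBall (0 : ℂ) R ∧ h z = 0}.Finite := by
  by_contra hinf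
  obtain ⟨x, -, hx⟩ := Set.Infinite.exists_accPt_of_subset_isCompact hinf
    (isCompact_closedBall (0 : ℂ) R) (fun z hz => hz.1)
  have han : AnalyticOnNhd ℂ h univ := fun z _ => hh.analyticAt z
  rw [accPt_iff_frequently_nhdsNE] at hx
  have := han.eqOn_zero_of_preconnected_of_frequently_eq_zero isPreconnected_univ
    (mem_univ x) (hx.mono fun z hz => hz.2)
  exact hw (this (mem_univ w))

lemma differentiable_dslope' {h : ℂ → ℂ} (hh : Differentiable ℂ h) (b : ℂ) :
    Differentiable ℂ (dslope h b) := by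
  rw [← differentiableOn_univ] at hh ⊢
  exact (Complex.differentiableOn_dslope univ_mem).2 hh

/-- Splits off the full power of `z - b` from an entire function, with an entire (not merely locally
analytic) cofactor; the cofactor is an iterated `dslope`. -/
lemma exists_eq_pow_mul {b : ℂ} (n : ℕ) : ∀ {h : ℂ → ℂ}, Differentiable ℂ h →
    analyticOrderAt h b = n →
    ∃ v : ℂ → ℂ, Differentiable ℂ v ∧ v b ≠ 0 ∧ ∀ z, h z = (z - b) ^ n * v z := by
  induction n with
  | zero =>
    intro h hh hn
    refine ⟨h, hh, ?_, by simp⟩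
    exact (hh.analyticAt b).analyticOrderAt_eq_zero.1 (by simpa using hn)
  | succ n ih =>
    intro h hh hn
    have hb : h b = 0 := by
      rw [← (hh.analyticAt b).analyticOrderAt_ne_zero, hn]
      simp
    have hd := differentiable_dslope' hh b
    have heq : h = (fun z => z - b) * dslope h b := by
      ext z
      have := sub_smul_dslope h b z
      simp only [hb, sub_zero, smul_eq_mul] at this
      simp [this]
    have hord : analyticOrderAt (dslope h b) b = n := by
      have h1 : analyticOrderAt h b = 1 + analyticOrderAt (dslope h b) b := by
        conv_lhs => rw [heq]
        rw [analyticOrderAt_mul (by fun_prop) (hd.analyticAt b),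
          analyticOrderAt_id_sub_const_self]
      rw [hn, Nat.cast_succ, add_comm] at h1
      exact (ENat.add_right_injective_of_ne_top ENat.one_ne_top h1).symm
    obtain ⟨v, hv, hvb, hvz⟩ := ih hd hord
    refine ⟨v, hv, hvb, fun z => ?_⟩
    rw [heq, Pi.mul_apply, hvz, pow_succ]
    ring

/-- `s` lists the zeros of `h` in the open disc of radius `R` with multiplicity, as witnessed
by the generalized argument principle `∮ φ · (deriv h / h) = 2πi ∑_{b ∈ s} φ b`. -/
def IsZeroMultiset (h : ℂ → ℂ) (R : ℝ) (s : Multiset ℂ) : Prop :=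
  (∀ z, z ∈ s ↔ z ∈ ball (0 : ℂ) R ∧ h z = 0) ∧
    ∀ φ : ℂ → ℂ, Differentiable ℂ φ →
      (∮ z in C(0, R), φ z * (deriv h z / h z)) = 2 * Real.pi * Complex.I * (s.map φ).sum

lemma IsZeroMultiset.mul {h v : ℂ → ℂ} {R : ℝ} (hR : 0 < R) {s : Multiset ℂ} {b : ℂ}
    (hs : IsZeroMultiset v R s) (hv : Differentiable ℂ v) (hb : b ∈ ball (0 : ℂ) R)
    (hvR : ∀ z ∈ sphere (0 : ℂ) R, v z ≠ 0) (hh : ∀ z, h z = (z - b) * v z) :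
    IsZeroMultiset h R (b ::ₘ s) := by
  obtain rfl : h = fun z => (z - b) * v z := funext hh
  refine ⟨fun z => ?_, fun φ hφ => ?_⟩
  · rw [Multiset.mem_cons, hs.1, mul_eq_zero, sub_eq_zero]
    constructor
    · rintro (rfl | h)
      · exact ⟨hb, Or.inl rfl⟩
      · exact ⟨h.1, Or.inr h.2⟩
    · tauto
  · have hne : ∀ z ∈ sphere (0 : ℂ) R, z - b ≠ 0 := by
      intro z hz h0
      rw [sub_eq_zero] at h0
      rw [mem_sphere] at hz
      rw [mem_ball, ← h0, hz] at hb
      exact lt_irrefl _ hb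
    have h1 : ∀ z ∈ sphere (0 : ℂ) R,
        φ z * (deriv (fun z => (z - b) * v z) z / ((z - b) * v z)) =
          (z - b)⁻¹ • φ z + φ z * (deriv v z / v z) := by
      intro z hz
      have hd : HasDerivAt (fun z => (z - b) * v z) (1 * v z + (z - b) * deriv v z) z :=
        ((hasDerivAt_id z).sub_const b).mul (hv z).hasDerivAt
      rw [hd.deriv, smul_eq_mul]
      have := hne z hz
      have := hvR z hz
      field_simp
    have hdv : Continuous (deriv v) :=
      (hv.contDiff (n := 1)).continuous_deriv le_rfl
    have i1 : CircleIntegrable (fun z => (z - b)⁻¹ • φ z) 0 R := by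
      refine ContinuousOn.circleIntegrable hR.le ?_
      exact ((continuousOn_id.sub continuousOn_const).inv₀ hne).smul hφ.continuous.continuousOn
    have i2 : CircleIntegrable (fun z => φ z * (deriv v z / v z)) 0 R := by
      refine ContinuousOn.circleIntegrable hR.le ?_
      exact hφ.continuous.continuousOn.mul
        (hdv.continuousOn.div hv.continuous.continuousOn hvR)
    rw [circleIntegral.integral_congr hR.le h1, circleIntegral.integral_add i1 i2, hs.2 φ hφ,
      hφ.differentiableOn.circleIntegral_sub_inv_smul hb]
    simp only [smul_eq_mul, Multiset.map_cons, Multiset.sum_cons]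
    ring

lemma IsZeroMultiset.pow_mul {v : ℂ → ℂ} {R : ℝ} (hR : 0 < R) {s : Multiset ℂ} {b : ℂ}
    (hs : IsZeroMultiset v R s) (hv : Differentiable ℂ v) (hb : b ∈ ball (0 : ℂ) R)
    (hvR : ∀ z ∈ sphere (0 : ℂ) R, v z ≠ 0) (n : ℕ) :
    ∃ t, IsZeroMultiset (fun z => (z - b) ^ n * v z) R t := by
  induction n with
  | zero => exact ⟨s, by simpa using hs⟩
  | succ n ih =>
    obtain ⟨t, ht⟩ := ih
    refine ⟨b ::ₘ t, ht.mul hR (by fun_prop) hb ?_ fun z => by ring⟩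
    intro z hz
    refine mul_ne_zero (pow_ne_zero _ fun h0 => ?_) (hvR z hz)
    rw [sub_eq_zero] at h0
    rw [mem_sphere] at hz
    rw [mem_ball, ← h0, hz] at hb
    exact lt_irrefl _ hb

/-- The generalized argument principle for entire functions without zeros on the circle. The
induction is on the number `k` of distinct zeros: each step divides out one zero completely. -/
lemma exists_isZeroMultiset {R : ℝ} (hR : 0 < R) (k : ℕ) : ∀ {h : ℂ → ℂ}, Differentiable ℂ h →
    (∀ z ∈ sphere (0 : ℂ) R, h z ≠ 0) → {z | z ∈ closedBall (0 : ℂ) R ∧ h z = 0}.ncard = k →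
    ∃ s, IsZeroMultiset h R s := by
  have hRs : (R : ℂ) ∈ sphere (0 : ℂ) R := by simp [abs_of_pos hR]
  induction k with
  | zero =>
    intro h hh hhR hk
    have hfin := finite_zeros_closedBall hh (hhR _ hRs) R
    rw [Set.ncard_eq_zero hfin] at hk
    have hne : ∀ z ∈ closedBall (0 : ℂ) R, h z ≠ 0 := fun z hz h0 => by
      have : z ∈ {z | z ∈ closedBall (0 : ℂ) R ∧ h z = 0} := ⟨hz, h0⟩
      rw [hk] at this
      exact this
    refine ⟨0, fun z => ?_, fun φ hφ => ?_⟩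
    · simpa using fun hz => hne z (by simpa using le_of_lt hz)
    · have hd : Differentiable ℂ (deriv h) := fun z => (hh.analyticAt z).deriv.differentiableAt
      have : DifferentiableOn ℂ (fun z => φ z * (deriv h z / h z)) (closedBall 0 R) :=
        hφ.differentiableOn.mul (hd.differentiableOn.div hh.differentiableOn hne)
      simpa using (this.diffContOnCl_ball subset_rfl).circleIntegral_eq_zero hR.le
  | succ k ih =>
    intro h hh hhR hk
    have hfin := finite_zeros_closedBall hh (hhR _ hRs) R
    obtain ⟨b, hbR, hb0⟩ := Set.nonempty_of_ncard_ne_zero (by rw [hk]; simp)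
    have hbR' : b ∈ ball (0 : ℂ) R := by
      rw [mem_closedBall] at hbR
      exact lt_of_le_of_ne hbR fun h => hhR b h hb0
    have htop : analyticOrderAt h b ≠ ⊤ := by
      have han : AnalyticOnNhd ℂ h univ := fun z _ => hh.analyticAt z
      intro h
      rw [analyticOrderAt_eq_top] at h
      exact hhR _ hRs
        (han.eqOn_zero_of_preconnected_of_eventuallyEq_zero isPreconnected_univ (mem_univ b) h
          (mem_univ _))
    obtain ⟨n, hn⟩ := ENat.ne_top_iff_exists.1 htop
    obtain ⟨v, hv, hvb, hvz⟩ := exists_eq_pow_mul n hh hn.symm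
    have hvR : ∀ z ∈ sphere (0 : ℂ) R, v z ≠ 0 := fun z hz h0 => hhR z hz (by simp [hvz, h0])
    have hset : {z | z ∈ closedBall (0 : ℂ) R ∧ v z = 0} =
        {z | z ∈ closedBall (0 : ℂ) R ∧ h z = 0} \ {b} := by
      ext z
      simp only [mem_ofPred_eq, Set.mem_sdiff, mem_singleton_iff, hvz, mul_eq_zero]
      constructor
      · rintro ⟨h1, h2⟩
        exact ⟨⟨h1, Or.inr h2⟩, by rintro rfl; exact hvb h2⟩
      · rintro ⟨⟨h1, h2 | h2⟩, h3⟩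
        · exact absurd (sub_eq_zero.1 (eq_zero_of_pow_eq_zero h2)) h3
        · exact ⟨h1, h2⟩
    obtain ⟨s, hs⟩ := ih hv hvR (by
      rw [hset, Set.ncard_sdiff_singleton_of_mem (show b ∈ {z | z ∈ closedBall (0 : ℂ) R ∧ h z = 0}
        from ⟨hbR, hb0⟩), hk]; rfl)
    obtain ⟨t, ht⟩ := hs.pow_mul hR hv hbR' hvR n
    exact ⟨t, by rwa [show h = _ from funext hvz]⟩

/-! ### From power sums to products -/

/-- Newton's identities, evaluated at a multiset of complex numbers. -/
lemma multiset_newton (s : Multiset ℂ) (k : ℕ) :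
    (k : ℂ) * s.esymm k = (-1) ^ (k + 1) *
      ∑ a ∈ Finset.HasAntidiagonal.antidiagonal k with a.1 < k,
        (-1) ^ a.1 * s.esymm a.1 * (s.map (· ^ a.2)).sum := by
  classical
  have hs : (Finset.univ : Finset s).val.map (fun x : s => (x : ℂ)) = s := Multiset.map_univ_coe s
  have h := congrArg (MvPolynomial.aeval (fun x : s => (x : ℂ)))
    (MvPolynomial.mul_esymm_eq_sum s ℂ k)
  simp only [map_mul, map_natCast, map_pow, map_neg, map_one, map_sum,
    MvPolynomial.aeval_esymm_eq_multiset_esymm, hs, MvPolynomial.psum, MvPolynomial.aeval_X] at h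
  rw [h]
  congr 1
  refine Finset.sum_congr rfl fun a _ => ?_
  congr 2
  conv_rhs => rw [← hs, Multiset.map_map]
  rfl

/-- If all power sums of a varying finite multiset are analytic in the parameter, so are its elementary
symmetric functions, by Newton's identities. -/
lemma analyticAt_esymm {t : ℂ → Multiset ℂ} {κ₀ : ℂ}
    (ht : ∀ k, AnalyticAt ℂ (fun κ => ((t κ).map (· ^ k)).sum) κ₀) (k : ℕ) :
    AnalyticAt ℂ (fun κ => (t κ).esymm k) κ₀ := by
  induction k using Nat.strong_induction_on with
  | _ k ih =>
    rcases Nat.eq_zero_or_pos k with rfl | hk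
    · simpa [Multiset.esymm] using analyticAt_const
    · have heq : (fun κ => (t κ).esymm k) = fun κ => (k : ℂ)⁻¹ * ((-1) ^ (k + 1) *
          ∑ a ∈ Finset.HasAntidiagonal.antidiagonal k with a.1 < k,
            (-1) ^ a.1 * (t κ).esymm a.1 * ((t κ).map (· ^ a.2)).sum) := by
        ext κ
        rw [← multiset_newton, inv_mul_cancel_left₀ (by exact_mod_cast hk.ne')]
      rw [heq]
      refine analyticAt_const.mul (analyticAt_const.mul
        (Finset.analyticAt_fun_sum _ fun a ha => ?_))
      exact (analyticAt_const.mul (ih _ (Finset.mem_filter.1 ha).2)).mul (ht _)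

/-- The zeroth power sum is the cardinality; being continuous and integer valued it is locally
constant, so near `κ₀` the product is the elementary symmetric function of one fixed degree. -/
lemma analyticAt_multiset_prod {t : ℂ → Multiset ℂ} {κ₀ : ℂ}
    (ht : ∀ k, AnalyticAt ℂ (fun κ => ((t κ).map (· ^ k)).sum) κ₀) :
    AnalyticAt ℂ (fun κ => (t κ).prod) κ₀ := by
  have h0 : ContinuousAt (fun κ => ((t κ).card : ℂ)) κ₀ := by
    simpa using (ht 0).continuousAt
  have hcard : ∀ᶠ κ in 𝓝 κ₀, (t κ).card = (t κ₀).card := by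
    filter_upwards [h0 (ball_mem_nhds _ one_pos)] with κ hκ
    rw [mem_preimage, mem_ball, dist_eq_norm] at hκ
    have h2 : ‖(((t κ).card - (t κ₀).card : ℤ) : ℂ)‖ < 1 := by push_cast; exact hκ
    rw [Complex.norm_intCast] at h2
    have h3 : |((t κ).card - (t κ₀).card : ℤ)| < 1 := by exact_mod_cast h2
    rw [Int.abs_lt_one_iff] at h3
    omega
  refine (analyticAt_esymm ht (t κ₀).card).congr ?_
  filter_upwards [hcard] with κ hκ
  rw [← hκ]
  simp [Multiset.esymm, Multiset.powersetCard_self]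

/-! ### Contour integrals depending on a parameter -/

/-- Differentiation under the integral sign; compactness of the circle gives a uniform bound on the
`κ`-derivative of the integrand. -/
lemma differentiableAt_circleIntegral_param {Φ : ℂ × ℂ → ℂ} {R : ℝ} (hR : 0 ≤ R) {κ₀ : ℂ}
    (hΦ : ∀ z ∈ sphere (0 : ℂ) R, AnalyticAt ℂ Φ (κ₀, z)) :
    DifferentiableAt ℂ (fun κ => ∮ z in C(0, R), Φ (κ, z)) κ₀ := by
  have hev : ∀ᶠ κ in 𝓝 κ₀, ∀ z ∈ sphere (0 : ℂ) R, AnalyticAt ℂ Φ (κ, z) :=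
    (isCompact_sphere (0 : ℂ) R).eventually_forall_of_forall_eventually fun z hz =>
      (hΦ z hz).eventually_analyticAt
  obtain ⟨ρ, hρ, hball⟩ := nhds_basis_closedBall.eventually_iff.1 hev
  have hmem : ∀ θ, circleMap 0 R θ ∈ sphere (0 : ℂ) R := fun θ => circleMap_mem_sphere _ hR θ
  have hdc : Continuous (deriv (circleMap 0 R)) := by
    rw [show deriv (circleMap 0 R) = fun θ => circleMap 0 R θ * Complex.I from
      funext fun θ => deriv_circleMap 0 R θ]
    fun_prop
  have hcont : ∀ κ ∈ closedBall κ₀ ρ, Continuous fun θ =>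
      deriv (circleMap 0 R) θ • Φ (κ, circleMap 0 R θ) := by
    intro κ hκ
    refine Continuous.smul hdc
      (continuous_iff_continuousAt.2 fun θ => ?_)
    exact ContinuousAt.comp (f := fun θ => (κ, circleMap 0 R θ))
      (hball hκ _ (hmem θ)).continuousAt (by fun_prop)
  let D : ℂ → ℝ → ℂ := fun κ θ =>
    deriv (circleMap 0 R) θ • fderiv ℂ Φ (κ, circleMap 0 R θ) (1, 0)
  have hD : ContinuousOn (fun p : ℂ × ℝ => D p.1 p.2) (closedBall κ₀ ρ ×ˢ Icc 0 (2 * Real.pi)) := by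
    rintro ⟨κ, θ⟩ ⟨hκ, -⟩
    refine ContinuousAt.continuousWithinAt (ContinuousAt.smul
      (f := fun p : ℂ × ℝ => deriv (circleMap 0 R) p.2)
      (g := fun p : ℂ × ℝ => fderiv ℂ Φ (p.1, circleMap 0 R p.2) (1, 0))
      (hdc.comp continuous_snd).continuousAt ?_)
    · refine ContinuousAt.clm_apply ?_ continuousAt_const
      exact ContinuousAt.comp (f := fun p : ℂ × ℝ => (p.1, circleMap 0 R p.2))
        (x := (κ, θ)) (hball hκ _ (hmem θ)).fderiv.continuousAt (by fun_prop)
  obtain ⟨C, hC⟩ := ((isCompact_closedBall κ₀ ρ).prod isCompact_Icc).exists_bound_of_continuousOn hD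
  have hsub : uIoc 0 (2 * Real.pi) ⊆ Icc 0 (2 * Real.pi) := by
    rw [uIoc_of_le Real.two_pi_pos.le]; exact Ioc_subset_Icc_self
  have key := intervalIntegral.hasDerivAt_integral_of_dominated_loc_of_deriv_le
    (μ := MeasureTheory.volume) (a := 0) (b := 2 * Real.pi)
    (F := fun κ θ => deriv (circleMap 0 R) θ • Φ (κ, circleMap 0 R θ)) (F' := D) (x₀ := κ₀)
    (s := closedBall κ₀ ρ) (bound := fun _ => C) (closedBall_mem_nhds _ hρ)
    (by
      filter_upwards [closedBall_mem_nhds κ₀ hρ] with κ hκ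
      exact (hcont κ hκ).aestronglyMeasurable)
    ((hcont κ₀ (mem_closedBall_self hρ.le)).intervalIntegrable _ _)
    (by
      refine (ContinuousOn.aestronglyMeasurable (s := Icc 0 (2 * Real.pi)) ?_
        measurableSet_Icc).mono_set hsub
      exact hD.comp (f := fun θ => (κ₀, θ)) (by fun_prop)
        fun θ hθ => ⟨mem_closedBall_self hρ.le, hθ⟩)
    (Eventually.of_forall fun θ hθ κ hκ => hC (κ, θ) ⟨hκ, hsub hθ⟩)
    (by simp)
    (Eventually.of_forall fun θ hθ κ hκ => by
      exact HasDerivAt.fun_const_smul _ <| (hball hκ _ (hmem θ)).differentiableAt.hasFDerivAt.comp_hasDerivAt κ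
        ((hasDerivAt_id κ).prodMk (hasDerivAt_const κ _)))
  exact key.2.differentiableAt

lemma analyticAt_circleIntegral_param {Φ : ℂ × ℂ → ℂ} {R : ℝ} (hR : 0 ≤ R) {κ₀ : ℂ}
    (hΦ : ∀ z ∈ sphere (0 : ℂ) R, AnalyticAt ℂ Φ (κ₀, z)) :
    AnalyticAt ℂ (fun κ => ∮ z in C(0, R), Φ (κ, z)) κ₀ := by
  rw [Complex.analyticAt_iff_eventually_differentiableAt]
  have hev : ∀ᶠ κ in 𝓝 κ₀, ∀ z ∈ sphere (0 : ℂ) R, AnalyticAt ℂ Φ (κ, z) :=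
    (isCompact_sphere (0 : ℂ) R).eventually_forall_of_forall_eventually fun z hz =>
      (hΦ z hz).eventually_analyticAt
  filter_upwards [hev] with κ hκ
  exact differentiableAt_circleIntegral_param hR hκ

/-! ### Elimination -/

/-- Elimination of the variable `a` from the system `F (κ, a) = G (κ, a) = 0` in the disc of radius
`R`. The eliminant is the product of `G (κ, b)` over the zeros `b` of `F (κ, ·)` in the disc, counted
with multiplicity; it is analytic in `κ` because its power sums are contour integrals. -/
lemma solvable_or_not {F G : ℂ × ℂ → ℂ} (hF : AnalyticOnNhd ℂ F univ)
    (hG : AnalyticOnNhd ℂ G univ) {R : ℝ} (hR : 0 < R) {κ₀ : ℂ}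
    (hne : ∀ z ∈ sphere (0 : ℂ) R, F (κ₀, z) ≠ 0) :
    (∀ᶠ κ in 𝓝 κ₀, ∃ a ∈ ball (0 : ℂ) R, F (κ, a) = 0 ∧ G (κ, a) = 0) ∨
      ∀ᶠ κ in 𝓝[≠] κ₀, ¬ ∃ a ∈ ball (0 : ℂ) R, F (κ, a) = 0 ∧ G (κ, a) = 0 := by
  have hslice : ∀ {H : ℂ × ℂ → ℂ}, AnalyticOnNhd ℂ H univ → ∀ κ,
      Differentiable ℂ fun z => H (κ, z) := fun {H} hH κ z => by
    exact (hH (κ, z) (mem_univ _)).differentiableAt.comp z (by fun_prop)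
  have hev : ∀ᶠ κ in 𝓝 κ₀, ∀ z ∈ sphere (0 : ℂ) R, F (κ, z) ≠ 0 :=
    (isCompact_sphere (0 : ℂ) R).eventually_forall_of_forall_eventually fun z hz =>
      (hF _ (mem_univ _)).continuousAt.eventually_ne (hne z hz)
  have hs : ∀ κ, ∃ s, (∀ z ∈ sphere (0 : ℂ) R, F (κ, z) ≠ 0) →
      IsZeroMultiset (fun z => F (κ, z)) R s := fun κ => by
    by_cases h : ∀ z ∈ sphere (0 : ℂ) R, F (κ, z) ≠ 0
    · obtain ⟨s, hs⟩ := exists_isZeroMultiset hR _ (hslice hF κ) h rfl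
      exact ⟨s, fun _ => hs⟩
    · exact ⟨0, fun h' => absurd h' h⟩
  choose s hs using hs
  -- The values of `G (κ, ·)` at the zeros of `F (κ, ·)`; the eliminant is `(t κ).prod`.
  let t : ℂ → Multiset ℂ := fun κ => (s κ).map fun z => G (κ, z)
  have ht : ∀ k, AnalyticAt ℂ (fun κ => ((t κ).map (· ^ k)).sum) κ₀ := by
    intro k
    have hΦ : ∀ z ∈ sphere (0 : ℂ) R, AnalyticAt ℂ
        (fun p : ℂ × ℂ => G p ^ k * (fderiv ℂ F p (0, 1) / F p)) (κ₀, z) := fun z hz => by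
      have h1 := hF (κ₀, z) (mem_univ _)
      have h2 := hG (κ₀, z) (mem_univ _)
      have h3 : AnalyticAt ℂ (fun p => fderiv ℂ F p (0, 1)) (κ₀, z) :=
        AnalyticAt.fun_comp ((ContinuousLinearMap.apply ℂ ℂ ((0, 1) : ℂ × ℂ)).analyticAt _) h1.fderiv
      exact (h2.fun_pow k).mul (h3.div h1 (hne z hz))
    refine ((analyticAt_const (v := (2 * Real.pi * Complex.I)⁻¹)).mul
      (analyticAt_circleIntegral_param hR.le hΦ)).congr ?_
    filter_upwards [hev] with κ hκ
    have h1 := (hs κ hκ).2 (fun z => G (κ, z) ^ k) ((hslice hG κ).fun_pow k)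
    have h2 : ∀ z, deriv (fun z => F (κ, z)) z = fderiv ℂ F (κ, z) (0, 1) := fun z =>
      ((hF (κ, z) (mem_univ _)).differentiableAt.hasFDerivAt.comp_hasDerivAt z
        ((hasDerivAt_const z κ).prodMk (hasDerivAt_id z))).deriv
    simp only [h2] at h1
    simp only [t, Multiset.map_map, Function.comp_def, Pi.mul_apply]
    rw [h1, inv_mul_cancel_left₀]
    simp [Real.pi_ne_zero]
  have hiff : ∀ᶠ κ in 𝓝 κ₀, (t κ).prod = 0 ↔
      ∃ a ∈ ball (0 : ℂ) R, F (κ, a) = 0 ∧ G (κ, a) = 0 := by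
    filter_upwards [hev] with κ hκ
    rw [Multiset.prod_eq_zero_iff]
    simp only [t, Multiset.mem_map, (hs κ hκ).1, and_assoc]
  rcases (analyticAt_multiset_prod ht).eventually_eq_zero_or_eventually_ne_zero with h | h
  · left
    filter_upwards [h, hiff] with κ h1 h2 using h2.1 h1
  · right
    filter_upwards [h, hiff.filter_mono nhdsWithin_le_nhds] with κ h1 h2 using fun h3 => h1 (h2.2 h3)

/-! ### Iterates of the exponential map -/

lemma E_iterate_analytic (n : ℕ) :
    AnalyticOnNhd ℂ (fun p : ℂ × ℂ => (E p.1)^[n] p.2) univ := by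
  intro p _
  induction n with
  | zero => simpa using analyticAt_snd
  | succ n ih =>
    simp only [Function.iterate_succ_apply', E]
    exact ih.cexp'.add analyticAt_fst

lemma E_iterate_hasDerivAt (κ a : ℂ) (n : ℕ) :
    HasDerivAt ((E κ)^[n]) (∏ i ∈ Finset.range n, Complex.exp ((E κ)^[i] a)) a := by
  induction n with
  | zero => simpa using hasDerivAt_id a
  | succ n ih =>
    have h : HasDerivAt (E κ) (Complex.exp ((E κ)^[n] a)) ((E κ)^[n] a) :=
      (Complex.hasDerivAt_exp _).add_const κ
    rw [Function.iterate_succ', Finset.prod_range_succ, mul_comm]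
    exact h.comp a ih

lemma E_iterate_bound (M B : ℝ) (j : ℕ) :
    ∃ C : ℝ, ∀ κ z : ℂ, ‖κ‖ ≤ M → ‖z‖ ≤ B → ‖(E κ)^[j] z‖ ≤ C := by
  induction j with
  | zero => exact ⟨B, fun κ z _ h => h⟩
  | succ j ih =>
    obtain ⟨C, hC⟩ := ih
    refine ⟨Real.exp C + M, fun κ z hκ hz => ?_⟩
    rw [Function.iterate_succ_apply', E]
    refine (norm_add_le _ _).trans (add_le_add ?_ hκ)
    rw [Complex.norm_exp]
    exact Real.exp_le_exp.2 ((Complex.re_le_norm _).trans (hC κ z hκ hz))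

/-- Properness: over bounded `κ`, periodic points of period `n` with multiplier `μ₀` are bounded. As
the multiplier is a product of `n` exponentials, one factor has norm at most `1 + ‖μ₀‖`; the orbit
point following it is bounded, and at most `n - 1` further steps lead back to `a`. -/
lemma periodic_bound {n : ℕ} (hn : 1 ≤ n) (μ₀ : ℂ) (M : ℝ) :
    ∃ R : ℝ, ∀ κ a : ℂ, ‖κ‖ ≤ M → (E κ)^[n] a = a →
      ∏ i ∈ Finset.range n, Complex.exp ((E κ)^[i] a) = μ₀ → ‖a‖ ≤ R := by
  choose C hC using E_iterate_bound M (1 + ‖μ₀‖ + M)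
  refine ⟨∑ j ∈ Finset.range n, |C j|, fun κ a hκ ha hμ => ?_⟩
  obtain ⟨i, hi, hle⟩ : ∃ i ∈ Finset.range n, ‖Complex.exp ((E κ)^[i] a)‖ ≤ 1 + ‖μ₀‖ := by
    by_contra! hlt
    have h1 : ∏ _i ∈ Finset.range n, (1 + ‖μ₀‖) ≤
        ∏ i ∈ Finset.range n, ‖Complex.exp ((E κ)^[i] a)‖ :=
      Finset.prod_le_prod (fun _ _ => by positivity) fun i hi => (hlt i hi).le
    rw [← norm_prod, hμ, Finset.prod_const, Finset.card_range] at h1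
    have h2 : 1 + ‖μ₀‖ ≤ (1 + ‖μ₀‖) ^ n :=
      le_self_pow₀ (by linarith [norm_nonneg μ₀]) (by omega)
    linarith
  rw [Finset.mem_range] at hi
  have h1 : ‖(E κ)^[i + 1] a‖ ≤ 1 + ‖μ₀‖ + M := by
    rw [Function.iterate_succ_apply', E]
    exact (norm_add_le _ _).trans (add_le_add hle hκ)
  have h2 := hC (n - (i + 1)) κ _ hκ h1
  rw [← Function.iterate_add_apply, Nat.sub_add_cancel (by omega), ha] at h2
  exact h2.trans ((le_abs_self _).trans
    (Finset.single_le_sum (f := fun j => |C j|) (fun _ _ => abs_nonneg _)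
      (Finset.mem_range.2 (by omega))))

/-- No iterate of `E κ` is the identity, since `E κ` takes the same value at `0` and `2πi`. -/
lemma E_iterate_ne_id {n : ℕ} (hn : 1 ≤ n) (κ : ℂ) : ∃ w, (E κ)^[n] w - w ≠ 0 := by
  by_contra! h
  have h1 := sub_eq_zero.1 (h 0)
  have h2 := sub_eq_zero.1 (h (2 * Real.pi * Complex.I))
  obtain ⟨m, rfl⟩ : ∃ m, n = m + 1 := ⟨n - 1, by omega⟩
  have h3 : E κ (2 * Real.pi * Complex.I) = E κ 0 := by simp [E, Complex.exp_two_pi_mul_I]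
  rw [Function.iterate_succ_apply, h3, ← Function.iterate_succ_apply, h1] at h2
  simp [Real.pi_ne_zero] at h2

lemma exists_radius {h : ℂ → ℂ} (hh : Differentiable ℂ h) {w : ℂ} (hw : h w ≠ 0) (r : ℝ) :
    ∃ R > r, ∀ z ∈ sphere (0 : ℂ) R, h z ≠ 0 := by
  obtain ⟨R, hR, hR'⟩ := ((Ioo_infinite (show r < r + 1 by linarith)).sdiff
    ((finite_zeros_closedBall hh hw (r + 1)).image norm)).nonempty
  refine ⟨R, hR.1, fun z hz h0 => hR' ⟨z, ⟨?_, h0⟩, by simpa using hz⟩⟩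
  rw [mem_sphere] at hz
  rw [mem_closedBall, hz]
  exact hR.2.le

lemma local_dichotomy {n : ℕ} (hn : 1 ≤ n) (μ₀ κ₀ : ℂ) :
    (∀ᶠ κ in 𝓝 κ₀, ∃ a : ℂ, (E κ)^[n] a = a ∧ deriv ((E κ)^[n]) a = μ₀) ∨
      ∀ᶠ κ in 𝓝[≠] κ₀, ¬ ∃ a : ℂ, (E κ)^[n] a = a ∧ deriv ((E κ)^[n]) a = μ₀ := by
  obtain ⟨r, hr⟩ := periodic_bound hn μ₀ (‖κ₀‖ + 1)
  obtain ⟨w, hw⟩ := E_iterate_ne_id hn κ₀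
  obtain ⟨R, hRr, hR⟩ := exists_radius (h := fun z => (E κ₀)^[n] z - z)
    (fun z => ((E_iterate_hasDerivAt κ₀ z n).sub (hasDerivAt_id z)).differentiableAt) hw (max r 0)
  have hG : AnalyticOnNhd ℂ
      (fun p : ℂ × ℂ => ∏ i ∈ Finset.range n, Complex.exp ((E p.1)^[i] p.2) - μ₀) univ :=
    fun p _ => (Finset.analyticAt_fun_prod _ fun i _ =>
      (E_iterate_analytic i p (mem_univ p)).cexp').sub analyticAt_const
  have hmain := solvable_or_not (F := fun p : ℂ × ℂ => (E p.1)^[n] p.2 - p.2)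
    (fun p _ => (E_iterate_analytic n p (mem_univ p)).sub analyticAt_snd) hG
    ((le_max_right r 0).trans_lt hRr) hR
  have hiff : ∀ᶠ κ in 𝓝 κ₀, (∃ a ∈ ball (0 : ℂ) R, (E κ)^[n] a - a = 0 ∧
      ∏ i ∈ Finset.range n, Complex.exp ((E κ)^[i] a) - μ₀ = 0) ↔
      ∃ a : ℂ, (E κ)^[n] a = a ∧ deriv ((E κ)^[n]) a = μ₀ := by
    filter_upwards [ball_mem_nhds κ₀ one_pos] with κ hκ
    simp only [(E_iterate_hasDerivAt κ _ n).deriv, sub_eq_zero]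
    refine ⟨fun ⟨a, _, h⟩ => ⟨a, h⟩, fun ⟨a, h1, h2⟩ => ⟨a, ?_, h1, h2⟩⟩
    have hκ' : ‖κ‖ ≤ ‖κ₀‖ + 1 := by
      rw [mem_ball, dist_eq_norm] at hκ
      linarith [norm_le_norm_add_norm_sub' κ κ₀]
    rw [mem_ball_zero_iff]
    exact ((hr κ a hκ' h1 h2).trans (le_max_left r 0)).trans_lt hRr
  rcases hmain with h | h
  · left
    filter_upwards [h, hiff] with κ h1 h2 using h2.1 h1
  · right
    filter_upwards [h, hiff.filter_mono nhdsWithin_le_nhds] with κ h1 h2 using fun h3 => h1 (h2.2 h3)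

/-! ### From the local to the global alternative -/

/-- If near each point `S` either fills a neighbourhood or misses a punctured one, then `interior S`
is clopen, so the same alternative holds throughout the connected plane. -/
lemma univ_or_isolated {S : Set ℂ}
    (hS : ∀ x, (∀ᶠ y in 𝓝 x, y ∈ S) ∨ ∀ᶠ y in 𝓝[≠] x, y ∉ S) :
    S = univ ∨ ∀ x, ∀ᶠ y in 𝓝[≠] x, y ∉ S := by
  have hclosed : IsClosed (interior S) := by
    refine isClosed_of_closure_subset fun x hx => ?_
    rcases hS x with h | h
    · exact mem_interior_iff_mem_nhds.2 h
    · exfalso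
      rw [eventually_nhdsWithin_iff, _root_.eventually_nhds_iff] at h
      obtain ⟨V, hV, hVo, hxV⟩ := h
      obtain ⟨y, hyV, hyS⟩ := mem_closure_iff.1 hx V hVo hxV
      have hsub : V ∩ interior S ⊆ {x} := fun z hz => by
        by_contra hzx
        exact hV z hz.1 hzx (interior_subset hz.2)
      have hopen : IsOpen ({x} : Set ℂ) := by
        have : V ∩ interior S = {x} :=
          (subset_singleton_iff_eq.1 hsub).resolve_left (Set.Nonempty.ne_empty ⟨y, hyV, hyS⟩)
        exact this ▸ hVo.inter isOpen_interior
      exact not_isOpen_singleton x hopen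
  rcases isClopen_iff.1 ⟨hclosed, isOpen_interior⟩ with h | h
  · right
    refine fun x => (hS x).resolve_left fun h' => ?_
    have : x ∈ interior S := mem_interior_iff_mem_nhds.2 h'
    rw [h] at this
    exact this
  · exact Or.inl (interior_eq_univ.1 h)

/-- For fixed μ₀ and n ≥ 1, the set of parameters κ for which E_κ has a periodic
    point of period n with multiplier exactly μ₀ is either all of ℂ or a discrete
    (countable, with no accumulation points in ℂ) subset of ℂ. -/
theorem multiplier_level_set_discrete_or_univ (n : ℕ) (hn : 1 ≤ n) (μ₀ : ℂ) :
    (let S : Set ℂ := {κ : ℂ | ∃ a : ℂ, (E κ)^[n] a = a ∧ deriv ((E κ)^[n]) a = μ₀}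
     S = Set.univ ∨ (S.Countable ∧ ∀ κ : ℂ, κ ∉ closure (S \ {κ}))) := by
  intro S
  refine (univ_or_isolated (S := S) fun x => local_dichotomy hn μ₀ x).imp id fun h => ⟨?_, ?_⟩
  · refine (HereditarilyLindelofSpace.isLindelof S).countable ?_
    rw [discreteTopology_subtype_iff]
    intro x _
    rw [← disjoint_iff, disjoint_principal_right]
    exact h x
  · intro κ hκ
    rw [mem_closure_iff_frequently] at hκ
    refine hκ ?_
    have := eventually_nhdsWithin_iff.1 (h κ)
    filter_upwards [this] with y hy hyS using hy hyS.2 hyS.1
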